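/- Let β=(1,2) and γ∈{γ_adj,γ_opp}, where γ_adj(t)=(t,t²) and γ_opp(t)=(t,sign(t)·t²). There exists A*≥1 such that for every A_1≥A* the following holds (with A_2=10A_1 and the sets Q̃, V_1, P, P̃, W_1 as defined): for every (1,2)-cube Q=I×J and every z∈P, ⋃_{y∈φ(z,−,W_1)} φ(y,−,Q) = Q. -/

import Mathlib

/-!
A point `w ∈ Q` lies on a segment through some `y ∈ φ(z, −, W₁)` as soon as one can travel from
`w` to `z` along the curve twice, `z = w + γ(t) + γ(s)`, with `t ∈ I_{A₁}` and `s ∈ I_{A₂}`: then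
`y = w + γ(t)` is in `Q̃` because of `w` and in `P̃` because of `z`. Let `c₁, c₂` be the midpoints
of the two intervals. Since `z ∈ P`, the target is `z - w = γ(c₁) + γ(c₂) + d` with `|d₁| ≤ L` and
`|d₂| ≤ L²`. Moving the parameters to `t = c₁ + d₁ - v` and `s = c₂ + v` matches the first
coordinate for every `v`; the second coordinate is a quadratic in `v` whose linear coefficient
`2(c₂ - c₁)` is large because the intervals are far apart, so it attains the required value with
`|v| ≤ L/2`. Only positive parameters occur, and there the two parabolas coincide.
-/

open MeasureTheory Set

noncomputable section

/-- The parabola `γ_adj(t) = (t, t²)` (parts in adjacent quadrants). -/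
def gAdj (t : ℝ) : ℝ × ℝ := (t, t ^ 2)

/-- The parabola `γ_opp(t) = (t, sign(t)·t²)` (parts in opposite quadrants). -/
def gOpp (t : ℝ) : ℝ × ℝ := (t, Real.sign t * t ^ 2)

/-- The `(1,2)`-cube `Q = I × J` with `I = [x₀, x₀+L]`, `J = [y₀, y₀+L²]`,
so that `ℓ(J) = ℓ(I)²`. -/
def cubeQ (x0 y0 L : ℝ) : Set (ℝ × ℝ) :=
  Icc x0 (x0 + L) ×ˢ Icc y0 (y0 + L ^ 2)

/-- The auxiliary interval `I_A = ℓ(I)·[A, A+3]`. -/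
def intA (L A : ℝ) : Set ℝ := Icc (L * A) (L * (A + 3))

/-- `Q̃ = {x + γ(t) : x ∈ Q, t ∈ I_{A₁}}`. -/
def tilQ (γ : ℝ → ℝ × ℝ) (x0 y0 L A1 : ℝ) : Set (ℝ × ℝ) :=
  {w | ∃ x ∈ cubeQ x0 y0 L, ∃ t ∈ intA L A1, w = x + γ t}

/-- `P = V₁ + γ(c_{I_{A₂}})` with `V₁ = Q + γ(c_{I_{A₁}})` and `A₂ = 10·A₁`. -/
def setP (γ : ℝ → ℝ × ℝ) (x0 y0 L A1 : ℝ) : Set (ℝ × ℝ) :=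
  (fun x => x + γ (L * (A1 + 3/2)) + γ (L * (10 * A1 + 3/2))) '' cubeQ x0 y0 L

/-- `P̃ = {z - γ(t) : z ∈ P, t ∈ I_{A₂}}` with `A₂ = 10·A₁`. -/
def tilP (γ : ℝ → ℝ × ℝ) (x0 y0 L A1 : ℝ) : Set (ℝ × ℝ) :=
  {w | ∃ z ∈ setP γ x0 y0 L A1, ∃ t ∈ intA L (10 * A1), w = z - γ t}

/-- `W₁ = Q̃ ∩ P̃`. -/
def setW1 (γ : ℝ → ℝ × ℝ) (x0 y0 L A1 : ℝ) : Set (ℝ × ℝ) :=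
  tilQ γ x0 y0 L A1 ∩ tilP γ x0 y0 L A1

/-- `φ(a, −, B) = {a − γ(t) : t ∈ ℝ} ∩ B`. -/
def phiM (γ : ℝ → ℝ × ℝ) (a : ℝ × ℝ) (B : Set (ℝ × ℝ)) : Set (ℝ × ℝ) :=
  {w ∈ B | ∃ t : ℝ, w = a - γ t}

/-- `I(a, +, B) = {t ∈ ℝ : a + γ(t) ∈ B}`. -/
def IsetP (γ : ℝ → ℝ × ℝ) (a : ℝ × ℝ) (B : Set (ℝ × ℝ)) : Set ℝ :=
  {t : ℝ | a + γ t ∈ B}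

theorem eqOn_gOpp_gAdj : EqOn gOpp gAdj (Ioi 0) := fun t ht => by
  simp [gOpp, gAdj, Real.sign_of_pos ht]

theorem exists_abs_le_sq_add_sq_eq {c₁ c₂ d₁ d₂ r : ℝ} (hr : 0 ≤ r)
    (h : 2 * |c₁| * |d₁| + |d₂| + (|d₁| + r) ^ 2 + r ^ 2 ≤ 2 * (c₂ - c₁) * r) :
    ∃ v, |v| ≤ r ∧ (c₁ + d₁ - v) ^ 2 + (c₂ + v) ^ 2 = c₁ ^ 2 + c₂ ^ 2 + d₂ := by
  let F : ℝ → ℝ := fun v => (c₁ + d₁ - v) ^ 2 + (c₂ + v) ^ 2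
  have hF_expand (v : ℝ) : F v = c₁ ^ 2 + c₂ ^ 2 + 2 * (c₂ - c₁) * v
      + (2 * (c₁ * d₁) + (d₁ - v) ^ 2 + v ^ 2) := by
    simp only [F]
    ring
  obtain ⟨hlow, hupp⟩ : -(2 * |c₁| * |d₁|) ≤ 2 * (c₁ * d₁) ∧ 2 * (c₁ * d₁) ≤ 2 * |c₁| * |d₁| := by
    rw [← abs_le, abs_mul, abs_mul, abs_two, mul_assoc]
  have hsq : (d₁ - -r) ^ 2 ≤ (|d₁| + r) ^ 2 := by
    apply sq_le_sq' <;> linarith [neg_abs_le d₁, le_abs_self d₁]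
  have hleft : F (-r) ≤ c₁ ^ 2 + c₂ ^ 2 + d₂ := by
    rw [hF_expand]
    linarith [neg_abs_le d₂]
  have hright : c₁ ^ 2 + c₂ ^ 2 + d₂ ≤ F r := by
    rw [hF_expand]
    linarith [le_abs_self d₂, sq_nonneg (d₁ - r), sq_nonneg r, sq_nonneg (|d₁| + r)]
  have hF : ContinuousOn F (Icc (-r) r) := by fun_prop
  obtain ⟨v, hv, hFv⟩ := intermediate_value_Icc (by linarith) hF ⟨hleft, hright⟩
  exact ⟨v, abs_le.mpr hv, hFv⟩

theorem exists_gAdj_add_gAdj_eq {c₁ c₂ r : ℝ} {d : ℝ × ℝ} (hr : 0 ≤ r)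
    (h : 2 * |c₁| * |d.1| + |d.2| + (|d.1| + r) ^ 2 + r ^ 2 ≤ 2 * (c₂ - c₁) * r) :
    ∃ t s, |t - c₁| ≤ |d.1| + r ∧ |s - c₂| ≤ r ∧ gAdj t + gAdj s = gAdj c₁ + gAdj c₂ + d := by
  obtain ⟨v, hv, hsq⟩ := exists_abs_le_sq_add_sq_eq hr h
  refine ⟨c₁ + d.1 - v, c₂ + v, ?_, by simpa using hv, Prod.ext ?_ hsq⟩
  · calc |c₁ + d.1 - v - c₁| = |d.1 - v| := by ring_nf
      _ ≤ |d.1| + |v| := abs_sub _ _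
      _ ≤ |d.1| + r := by gcongr
  · simp only [gAdj, Prod.fst_add]
    ring

theorem mem_intA_iff_abs_sub_le {L A t : ℝ} :
    t ∈ intA L A ↔ |t - L * (A + 3 / 2)| ≤ L + L / 2 := by
  rw [intA, mem_Icc, abs_le]
  constructor <;> rintro ⟨_, _⟩ <;> constructor <;> linarith

theorem intA_subset_Ioi {L A : ℝ} (hL : 0 < L) (hA : 0 < A) : intA L A ⊆ Ioi 0 :=
  fun _ ht => (mul_pos hL hA).trans_le ht.1

theorem exists_mem_intA_add_eq {γ : ℝ → ℝ × ℝ} (hγ : EqOn γ gAdj (Ioi 0)) {L A B : ℝ}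
    (hL : 0 < L) (hA : 0 < A) (hAB : 3 * A + 13 / 2 ≤ B) {d : ℝ × ℝ}
    (hd₁ : |d.1| ≤ L) (hd₂ : |d.2| ≤ L ^ 2) :
    ∃ t ∈ intA L A, ∃ s ∈ intA L B,
      γ t + γ s = γ (L * (A + 3 / 2)) + γ (L * (B + 3 / 2)) + d := by
  have hB : 0 < B := by linarith
  have hc₁ : 0 < L * (A + 3 / 2) := by positivity
  have hc₂ : 0 < L * (B + 3 / 2) := by positivity
  have hsep : 2 * |L * (A + 3 / 2)| * |d.1| + |d.2| + (|d.1| + L / 2) ^ 2 + (L / 2) ^ 2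
      ≤ 2 * (L * (B + 3 / 2) - L * (A + 3 / 2)) * (L / 2) := by
    rw [abs_of_pos hc₁]
    calc 2 * (L * (A + 3 / 2)) * |d.1| + |d.2| + (|d.1| + L / 2) ^ 2 + (L / 2) ^ 2
        ≤ 2 * (L * (A + 3 / 2)) * L + L ^ 2 + (L + L / 2) ^ 2 + (L / 2) ^ 2 := by gcongr
      _ = L ^ 2 * (3 * A + 13 / 2 - A) := by ring
      _ ≤ L ^ 2 * (B - A) := by gcongr
      _ = 2 * (L * (B + 3 / 2) - L * (A + 3 / 2)) * (L / 2) := by ring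
  obtain ⟨t, s, ht, hs, hts⟩ := exists_gAdj_add_gAdj_eq (half_pos hL).le hsep
  have htA : t ∈ intA L A := mem_intA_iff_abs_sub_le.mpr (by linarith)
  have hsB : s ∈ intA L B := mem_intA_iff_abs_sub_le.mpr (by linarith)
  refine ⟨t, htA, s, hsB, ?_⟩
  rw [hγ (intA_subset_Ioi hL hA htA), hγ (intA_subset_Ioi hL hB hsB), hγ hc₁, hγ hc₂, hts]

theorem abs_sub_le_of_mem_cubeQ {x0 y0 L : ℝ} {p q : ℝ × ℝ}
    (hp : p ∈ cubeQ x0 y0 L) (hq : q ∈ cubeQ x0 y0 L) :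
    |(p - q).1| ≤ L ∧ |(p - q).2| ≤ L ^ 2 :=
  ⟨(Real.dist_le_of_mem_Icc hp.1 hq.1).trans_eq (add_sub_cancel_left _ _),
    (Real.dist_le_of_mem_Icc hp.2 hq.2).trans_eq (add_sub_cancel_left _ _)⟩

theorem mem_iUnion_phiM_phiM_iff {γ : ℝ → ℝ × ℝ} {z w : ℝ × ℝ} {W B : Set (ℝ × ℝ)} :
    w ∈ ⋃ y ∈ phiM γ z W, phiM γ y B ↔ w ∈ B ∧ ∃ t s, w + γ t ∈ W ∧ w + γ t + γ s = z := by
  simp only [mem_iUnion₂, phiM, mem_ofPred_eq]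
  constructor
  · rintro ⟨y, ⟨hyW, s, hs⟩, hwB, t, rfl⟩
    refine ⟨hwB, t, s, ?_, ?_⟩
    · rwa [sub_add_cancel]
    · rw [sub_add_cancel, hs, sub_add_cancel]
  · rintro ⟨hwB, t, s, htW, hz⟩
    exact ⟨w + γ t, ⟨htW, s, eq_sub_of_add_eq hz⟩, hwB, t, (add_sub_cancel_right _ _).symm⟩

theorem add_mem_setW1 {γ : ℝ → ℝ × ℝ} {x0 y0 L A1 t s : ℝ} {w z : ℝ × ℝ}
    (hw : w ∈ cubeQ x0 y0 L) (hz : z ∈ setP γ x0 y0 L A1) (ht : t ∈ intA L A1)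
    (hs : s ∈ intA L (10 * A1)) (hwz : w + γ t + γ s = z) :
    w + γ t ∈ setW1 γ x0 y0 L A1 :=
  ⟨⟨w, hw, t, ht, rfl⟩, ⟨z, hz, s, hs, eq_sub_of_add_eq hwz⟩⟩

theorem key_lemma_foliation_general {γ : ℝ → ℝ × ℝ} (hγ : EqOn γ gAdj (Ioi 0))
    {x0 y0 L A1 : ℝ} (hL : 0 < L) (hA1 : 1 ≤ A1) {z : ℝ × ℝ} (hz : z ∈ setP γ x0 y0 L A1) :
    (⋃ y ∈ phiM γ z (setW1 γ x0 y0 L A1), phiM γ y (cubeQ x0 y0 L)) = cubeQ x0 y0 L := by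
  refine Subset.antisymm (fun w hw => (mem_iUnion_phiM_phiM_iff.mp hw).1) fun w hw => ?_
  have ⟨q, hq, hqz⟩ := hz
  obtain ⟨hd₁, hd₂⟩ := abs_sub_le_of_mem_cubeQ hq hw
  obtain ⟨t, ht, s, hs, hts⟩ :=
    exists_mem_intA_add_eq hγ hL (by linarith) (by linarith : 3 * A1 + 13 / 2 ≤ 10 * A1) hd₁ hd₂
  have hwz : w + γ t + γ s = z := calc
    w + γ t + γ s = w + (γ (L * (A1 + 3 / 2)) + γ (L * (10 * A1 + 3 / 2)) + (q - w)) := by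
      rw [add_assoc, hts]
    _ = q + γ (L * (A1 + 3 / 2)) + γ (L * (10 * A1 + 3 / 2)) := by abel
    _ = z := hqz
  exact mem_iUnion_phiM_phiM_iff.mpr ⟨hw, t, s, add_mem_setW1 hw hz ht hs hwz, hwz⟩

/-- **Key lemma (foliation of `Q` by parabolic segments).** For `γ ∈ {γ_adj, γ_opp}`
there is `A* ≥ 1` such that for every `A₁ ≥ A*` (with `A₂ = 10·A₁`), every
`(1,2)`-cube `Q` and every `z ∈ P`, the parabolic segments through the points of
`φ(z, −, W₁)` foliate `Q`: `⋃_{y ∈ φ(z,−,W₁)} φ(y, −, Q) = Q`. -/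
theorem key_lemma_foliation (γ : ℝ → ℝ × ℝ) (hγ : γ = gAdj ∨ γ = gOpp) :
    ∃ Astar : ℝ, 1 ≤ Astar ∧ ∀ A1 : ℝ, Astar ≤ A1 →
      ∀ x0 y0 L : ℝ, 0 < L →
        ∀ z ∈ setP γ x0 y0 L A1,
          (⋃ y ∈ phiM γ z (setW1 γ x0 y0 L A1), phiM γ y (cubeQ x0 y0 L)) =
            cubeQ x0 y0 L := by
  have hγ_pos : EqOn γ gAdj (Ioi 0) := by
    rcases hγ with rfl | rfl
    exacts [eqOn_refl _ _, eqOn_gOpp_gAdj]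
  exact ⟨1, le_rfl, fun _ hA1 _ _ _ hL _ hz => key_lemma_foliation_general hγ_pos hL hA1 hz⟩

end
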